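/- arXiv:hep-th/0107047 — 4 statements merged into one kernel-verified Lean document; each statement's English description precedes it below -/
import Mathlib

section
/- Let φ be a nonzero linear functional on ⊗^Lℂ^N and Λ : ℂ → ℂ a function with φ∘T_{h⃗}(x) = Λ(x)·φ for all x ∈ ℂ. Then Λ is (the evaluation of) a polynomial in x of degree at most 2⌊L/2⌋, Λ(−x) = Λ(x) for all x ∈ ℂ, and there exists an integer s such that Λ(0) = q^s·∏_{j=0}^{L−1}a_j + ∏_{j=0}^{L−1}d_j. -/
/-!
The entry `(i, j)` of each `L`-operator is constant in `x` when `i = j` and linear in `x` when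
`i ≠ j`. A closed path in the two auxiliary indices changes index an even number of times, so the
transfer matrix is an even operator-valued polynomial of degree at most `L`
(`transfer_mem_parityPoly`); evaluating `φ ∘ T(x)` on a vector `w` with `φ w = 1` transfers this to
`Λ`.

At `x = 0` the monodromy matrix is diagonal and `T(0) = (∏ a_j) Y^{⊗L} + (∏ d_j)`
(`transfer_zero`). Since `N` is odd, `Y ^ N = ω ^ (0 + 1 + ⋯ + (N - 1)) = 1`, and the copies of `Y`
on different sites commute, so `(Y^{⊗L}) ^ N = 1` (`list_prod_emb_Yop_pow`). If `∏ a_j ≠ 0`, then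
`φ` is a left eigenvector of `Y^{⊗L}`, and its eigenvalue is an `N`-th root of unity
`ω ^ i = q ^ (2 i)`; if `∏ a_j = 0`, every `s` works.
-/

open Matrix Polynomial

noncomputable section

/-- The operator `Z` on `ℂ^N`: `(Zv)_k = ω^k v_k`. -/
def Zop (N : ℕ) (ω : ℂ) : Matrix (ZMod N) (ZMod N) ℂ :=
  Matrix.diagonal fun k => ω ^ k.val

/-- The operator `X` on `ℂ^N`: `(Xv)_k = v_{k-1}`. -/
def Xop (N : ℕ) : Matrix (ZMod N) (ZMod N) ℂ :=
  Matrix.of fun k k' => if k' = k - 1 then 1 else 0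

/-- The operator `Y := Z * X` on `ℂ^N`. -/
def Yop (N : ℕ) [NeZero N] (ω : ℂ) : Matrix (ZMod N) (ZMod N) ℂ :=
  Zop N ω * Xop N

/-- The `L`-operator `L_h(x)`, a 2×2 matrix of operators on `ℂ^N`, for
`h = (a,b,c,d) ∈ ℂ⁴`: first row `(aY, xbX)`, second row `(xcZ, d·I)`. -/
def Lop (N : ℕ) [NeZero N] (ω : ℂ) (h : ℂ × ℂ × ℂ × ℂ) (x : ℂ) :
    Matrix (Fin 2) (Fin 2) (Matrix (ZMod N) (ZMod N) ℂ) :=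
  Matrix.of
    ![![h.1 • Yop N ω, (x * h.2.1) • Xop N],
      ![(x * h.2.2.1) • Zop N ω, h.2.2.2 • (1 : Matrix (ZMod N) (ZMod N) ℂ)]]

/-- Embedding of an operator on `ℂ^N` as an operator on `⊗^L ℂ^N` acting on the `j`-th
tensor slot. -/
def emb (N L : ℕ) [NeZero N] [NeZero L] (j : ZMod L) (A : Matrix (ZMod N) (ZMod N) ℂ) :
    Matrix (ZMod L → ZMod N) (ZMod L → ZMod N) ℂ :=
  Matrix.of fun k k' =>
    A (k j) (k' j) * ∏ i ∈ Finset.univ.erase j, (if k i = k' i then (1 : ℂ) else 0)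

/-- The monodromy matrix `L_{h⃗}(x) = L_{h₀}(x) ⋯ L_{h_{L-1}}(x)`, a 2×2 matrix of
operators on `⊗^L ℂ^N`, the operator entries of the `j`-th factor acting on the
`j`-th tensor slot. -/
def mono (N L : ℕ) [NeZero N] [NeZero L] (ω : ℂ) (h : ZMod L → ℂ × ℂ × ℂ × ℂ) (x : ℂ) :
    Matrix (Fin 2) (Fin 2) (Matrix (ZMod L → ZMod N) (ZMod L → ZMod N) ℂ) :=
  ((List.finRange L).map fun j =>
    (Lop N ω (h ((j : ℕ) : ZMod L)) x).map (emb N L ((j : ℕ) : ZMod L))).prod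

/-- The transfer matrix `T_{h⃗}(x)`: the trace of the monodromy matrix over the 2×2
auxiliary indices. -/
def transfer (N L : ℕ) [NeZero N] [NeZero L] (ω : ℂ) (h : ZMod L → ℂ × ℂ × ℂ × ℂ)
    (x : ℂ) : Matrix (ZMod L → ZMod N) (ZMod L → ZMod N) ℂ :=
  mono N L ω h x 0 0 + mono N L ω h x 1 1

/-! ### Operator-valued polynomial functions with a parity -/

/-- Functions `ℂ → R` spanned by the monomials `x ↦ x ^ k • r` with `k ≤ n` and `k ≡ p (mod 2)`:
`R`-valued polynomial functions of degree at most `n` and of the parity of `p`. -/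
def parityPoly (R : Type*) [AddCommGroup R] [Module ℂ R] (n p : ℕ) : Submodule ℂ (ℂ → R) :=
  Submodule.span ℂ {f | ∃ (k : ℕ) (r : R), k ≤ n ∧ (k + p) % 2 = 0 ∧ f = fun x => x ^ k • r}

lemma const_mul_mem_parityPoly {R : Type*} [Ring R] [Algebra ℂ R] {n p : ℕ} (A : R) {f : ℂ → R}
    (hf : f ∈ parityPoly R n p) : (fun x => A * f x) ∈ parityPoly R (n + 1) p := by
  induction hf using Submodule.span_induction with
  | mem f hf =>
    obtain ⟨k, r, hk, hp, rfl⟩ := hf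
    exact Submodule.subset_span ⟨k, A * r, by omega, hp, by funext x; simp⟩
  | zero =>
    simp only [Pi.zero_apply, mul_zero]
    exact (parityPoly R (n + 1) p).zero_mem
  | add f g _ _ hf hg =>
    simp only [Pi.add_apply, mul_add]
    exact (parityPoly R (n + 1) p).add_mem hf hg
  | smul c f _ hf =>
    simp only [Pi.smul_apply, mul_smul_comm]
    exact (parityPoly R (n + 1) p).smul_mem c hf

lemma linear_mul_mem_parityPoly {R : Type*} [Ring R] [Algebra ℂ R] {n p p' : ℕ}
    (hp' : (p + p') % 2 = 1) (c : ℂ) (A : R) {f : ℂ → R}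
    (hf : f ∈ parityPoly R n p) : (fun x => ((x * c) • A) * f x) ∈ parityPoly R (n + 1) p' := by
  induction hf using Submodule.span_induction with
  | mem f hf =>
    obtain ⟨k, r, hk, hp, rfl⟩ := hf
    refine Submodule.subset_span ⟨k + 1, c • (A * r), by omega, by omega, ?_⟩
    funext x
    simp only [smul_mul_assoc, mul_smul_comm, smul_smul]
    congr 1
    ring
  | zero =>
    simp only [Pi.zero_apply, mul_zero]
    exact (parityPoly R (n + 1) p').zero_mem
  | add f g _ _ hf hg =>
    simp only [Pi.add_apply, mul_add]
    exact (parityPoly R (n + 1) p').add_mem hf hg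
  | smul c f _ hf =>
    simp only [Pi.smul_apply, mul_smul_comm]
    exact (parityPoly R (n + 1) p').smul_mem c hf

lemma even_of_mem_parityPoly {R : Type*} [AddCommGroup R] [Module ℂ R] {n : ℕ} {f : ℂ → R}
    (hf : f ∈ parityPoly R n 0) (x : ℂ) : f (-x) = f x := by
  induction hf using Submodule.span_induction with
  | mem f hf =>
    obtain ⟨k, r, hk, hp, rfl⟩ := hf
    simp only [(Nat.even_iff.mpr (by omega) : Even k).neg_pow]
  | zero => rfl
  | add f g _ _ hf hg => simp [hf, hg]
  | smul c f _ hf => simp [hf]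

lemma exists_polynomial_of_mem_parityPoly {R : Type*} [AddCommGroup R] [Module ℂ R] {n : ℕ}
    {f : ℂ → R} (hf : f ∈ parityPoly R n 0) (ψ : R →ₗ[ℂ] ℂ) :
    ∃ P : Polynomial ℂ, (∀ x, ψ (f x) = P.eval x) ∧ P.natDegree ≤ 2 * (n / 2) := by
  induction hf using Submodule.span_induction with
  | mem f hf =>
    obtain ⟨k, r, hk, hp, rfl⟩ := hf
    refine ⟨Polynomial.C (ψ r) * Polynomial.X ^ k, fun x => by simp [mul_comm (x ^ k)], ?_⟩
    exact (Polynomial.natDegree_C_mul_X_pow_le _ _).trans (by omega)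
  | zero => exact ⟨0, by simp, by simp⟩
  | add f g _ _ hf hg =>
    obtain ⟨P, hP, hPd⟩ := hf
    obtain ⟨Q, hQ, hQd⟩ := hg
    exact ⟨P + Q, fun x => by simp [hP, hQ], Polynomial.natDegree_add_le_of_degree_le hPd hQd⟩
  | smul c f _ hf =>
    obtain ⟨P, hP, hPd⟩ := hf
    exact ⟨c • P, fun x => by simp [hP], (Polynomial.natDegree_smul_le _ _).trans hPd⟩

/-! ### Products of `L`-operators -/

lemma emb_smul (N L : ℕ) [NeZero N] [NeZero L] (j : ZMod L) (c : ℂ)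
    (A : Matrix (ZMod N) (ZMod N) ℂ) : emb N L j (c • A) = c • emb N L j A := by
  ext k k'
  simp [emb, mul_assoc]

lemma emb_zero (N L : ℕ) [NeZero N] [NeZero L] (j : ZMod L) : emb N L j 0 = 0 := by
  ext k k'
  simp [emb]

lemma emb_one (N L : ℕ) [NeZero N] [NeZero L] (j : ZMod L) : emb N L j 1 = 1 := by
  ext k k'
  simp only [emb, Matrix.of_apply, Matrix.one_apply]
  rw [Finset.mul_prod_erase Finset.univ (fun i => if k i = k' i then (1 : ℂ) else 0)
    (Finset.mem_univ j)]
  by_cases hk : k = k'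
  · simp [hk]
  · obtain ⟨i, hi⟩ := Function.ne_iff.mp hk
    rw [if_neg hk]
    exact Finset.prod_eq_zero (Finset.mem_univ i) (if_neg hi)

/-- Off-diagonal entries of each `L`-operator are linear in `x` and diagonal ones are constant,
so the `(i, j)` entry of a product of them has the parity of `i + j`. -/
lemma list_prod_mem_parityPoly (N L : ℕ) [NeZero N] [NeZero L] (ω : ℂ)
    (h : ZMod L → ℂ × ℂ × ℂ × ℂ) (l : List (ZMod L)) (i j : Fin 2) :
    (fun x => (l.map fun m => (Lop N ω (h m) x).map (emb N L m)).prod i j) ∈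
      parityPoly (Matrix (ZMod L → ZMod N) (ZMod L → ZMod N) ℂ) l.length
        ((i : ℕ) + (j : ℕ)) := by
  induction l generalizing i j with
  | nil =>
    by_cases hij : i = j
    · subst hij
      exact Submodule.subset_span ⟨0, 1, le_rfl, by omega, by funext x; simp⟩
    · have : (fun x : ℂ => (([] : List (ZMod L)).map
          fun m => (Lop N ω (h m) x).map (emb N L m)).prod i j) = 0 := by
        funext x
        simp [Matrix.one_apply_ne hij]
      rw [this]
      exact Submodule.zero_mem _
  | cons m l ih =>
    have h0 := ih 0 j
    have h1 := ih 1 j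
    simp only [List.map_cons, List.prod_cons, Matrix.mul_apply, Fin.sum_univ_two,
      List.length_cons]
    fin_cases i
    · refine Submodule.add_mem _ ?_ ?_
      · simpa [Lop] using const_mul_mem_parityPoly (emb N L m ((h m).1 • Yop N ω)) h0
      · simpa [Lop, emb_smul] using
          linear_mul_mem_parityPoly (p' := 0 + (j : ℕ)) (by simp; omega) (h m).2.1
            (emb N L m (Xop N)) h1
    · refine Submodule.add_mem _ ?_ ?_
      · simpa [Lop, emb_smul] using
          linear_mul_mem_parityPoly (p' := 1 + (j : ℕ)) (by simp; omega) (h m).2.2.1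
            (emb N L m (Zop N ω)) h0
      · simpa [Lop] using const_mul_mem_parityPoly
          (emb N L m ((h m).2.2.2 • (1 : Matrix (ZMod N) (ZMod N) ℂ))) h1

lemma list_prod_zero (N L : ℕ) [NeZero N] [NeZero L] (ω : ℂ)
    (h : ZMod L → ℂ × ℂ × ℂ × ℂ) (l : List (ZMod L)) :
    (l.map fun m => (Lop N ω (h m) 0).map (emb N L m)).prod =
      !![(l.map fun m => (h m).1).prod • (l.map fun m => emb N L m (Yop N ω)).prod, 0;
        0, (l.map fun m => (h m).2.2.2).prod • 1] := by
  induction l with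
  | nil => simp [Matrix.one_fin_two]
  | cons m l ih =>
    rw [List.map_cons, List.prod_cons, ih]
    ext1 i j
    fin_cases i <;> fin_cases j <;>
      simp [Lop, Matrix.mul_apply, Fin.sum_univ_two, emb_smul, emb_zero, emb_one, smul_smul,
        mul_comm]

/-! ### The operator `Y` and its tensor power -/

lemma emb_Yop_mulVec (N L : ℕ) [NeZero N] [NeZero L] (ω : ℂ) (j : ZMod L)
    (v : (ZMod L → ZMod N) → ℂ) (k : ZMod L → ZMod N) :
    (emb N L j (Yop N ω) *ᵥ v) k =
      ω ^ (k j).val * v (Function.update k j (k j - 1)) := by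
  simp only [Matrix.mulVec, dotProduct, emb, Yop, Zop, Xop, Matrix.diagonal_mul, Matrix.of_apply]
  rw [Finset.sum_eq_single (Function.update k j (k j - 1))]
  · rw [Finset.prod_eq_one]
    · simp
    · intro i hi
      simp [Function.update_of_ne (Finset.ne_of_mem_erase hi)]
  · intro k' _ hk'
    obtain ⟨i, hi⟩ := Function.ne_iff.mp hk'
    by_cases hij : i = j
    · subst hij
      rw [Function.update_self] at hi
      simp [hi]
    · rw [Function.update_of_ne hij] at hi
      rw [Finset.prod_eq_zero (Finset.mem_erase.mpr ⟨hij, Finset.mem_univ i⟩)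
        (if_neg (Ne.symm hi))]
      simp
  · simp

lemma commute_emb_Yop (N L : ℕ) [NeZero N] [NeZero L] (ω : ℂ) {i j : ZMod L} (hij : i ≠ j) :
    Commute (emb N L i (Yop N ω)) (emb N L j (Yop N ω)) := by
  refine Matrix.mulVec_injective ?_
  funext v k
  simp only [← Matrix.mulVec_mulVec, emb_Yop_mulVec, Function.update_of_ne hij,
    Function.update_of_ne hij.symm]
  rw [Function.update_comm hij]
  ring

lemma emb_Yop_pow_mulVec (N L : ℕ) [NeZero N] [NeZero L] (ω : ℂ) (j : ZMod L) (n : ℕ)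
    (v : (ZMod L → ZMod N) → ℂ) (k : ZMod L → ZMod N) :
    ((emb N L j (Yop N ω) ^ n) *ᵥ v) k =
      (∏ t ∈ Finset.range n, ω ^ (k j - (t : ZMod N)).val) *
        v (Function.update k j (k j - (n : ZMod N))) := by
  induction n generalizing v with
  | zero => simp
  | succ n ih =>
    rw [pow_succ, ← Matrix.mulVec_mulVec, ih, emb_Yop_mulVec, Finset.prod_range_succ]
    simp only [Function.update_self, Function.update_idem, Nat.cast_succ, sub_sub]
    ring

/-- The full product of the phases is `ω ^ (0 + 1 + ⋯ + 2M)`, whose exponent `M (2M + 1)` is a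
multiple of `N = 2M + 1` because `N` is odd. -/
lemma prod_range_pow_val (M : ℕ) (ω : ℂ) (hω : ω ^ (2 * M + 1) = 1) (a : ZMod (2 * M + 1)) :
    ∏ t ∈ Finset.range (2 * M + 1), ω ^ (a - (t : ZMod (2 * M + 1))).val = 1 := by
  have h1 : ∏ t ∈ Finset.range (2 * M + 1), ω ^ (a - (t : ZMod (2 * M + 1))).val =
      ∏ z : ZMod (2 * M + 1), ω ^ (a - z).val := by
    rw [Finset.prod_range]
    exact Fintype.prod_congr _ _ fun i => by
      rw [show (((i : ℕ) : ZMod (2 * M + 1))) = i from Fin.cast_val_eq_self i]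
  have h2 : ∏ z : ZMod (2 * M + 1), ω ^ (a - z).val = ∏ z : ZMod (2 * M + 1), ω ^ z.val :=
    Fintype.prod_equiv (Equiv.subLeft a) _ _ fun _ => rfl
  have h3 : ∏ z : ZMod (2 * M + 1), ω ^ z.val = ∏ t ∈ Finset.range (2 * M + 1), ω ^ t :=
    (Finset.prod_range fun t => ω ^ t).symm
  have h4 : ∑ t ∈ Finset.range (2 * M + 1), t = (2 * M + 1) * M := by
    have := Finset.sum_range_id_mul_two (2 * M + 1)
    rw [Nat.add_sub_cancel] at this
    linarith
  rw [h1, h2, h3, Finset.prod_pow_eq_pow_sum, h4, pow_mul, hω, one_pow]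

lemma emb_Yop_pow_eq_one (M L : ℕ) [NeZero L] (ω : ℂ) (hω : ω ^ (2 * M + 1) = 1) (j : ZMod L) :
    emb (2 * M + 1) L j (Yop (2 * M + 1) ω) ^ (2 * M + 1) = 1 := by
  refine Matrix.mulVec_injective ?_
  funext v k
  rw [emb_Yop_pow_mulVec, prod_range_pow_val M ω hω, ZMod.natCast_self]
  simp

lemma list_prod_emb_Yop_pow (M L : ℕ) [NeZero L] (ω : ℂ) (hω : ω ^ (2 * M + 1) = 1)
    (l : List (ZMod L)) (hl : l.Nodup) :
    (l.map fun m => emb (2 * M + 1) L m (Yop (2 * M + 1) ω)).prod ^ (2 * M + 1) = 1 := by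
  induction l with
  | nil => simp
  | cons m l ih =>
    rw [List.nodup_cons] at hl
    rw [List.map_cons, List.prod_cons, Commute.mul_pow, emb_Yop_pow_eq_one M L ω hω, ih hl.2,
      one_mul]
    refine Commute.list_prod_right _ _ fun B hB => ?_
    obtain ⟨i, hi, rfl⟩ := List.mem_map.mp hB
    exact commute_emb_Yop _ _ _ fun h => hl.1 (h ▸ hi)

/-! ### The transfer matrix -/

/-- The sites `0, …, L - 1` in the order in which they enter the monodromy matrix. -/
def sites (L : ℕ) : List (ZMod L) :=
  (List.finRange L).map fun j : Fin L => ((j : ℕ) : ZMod L)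

lemma sites_eq_map_range (L : ℕ) : sites L = (List.range L).map fun j : ℕ => (j : ZMod L) := by
  rw [sites, ← List.map_coe_finRange_eq_range, List.map_map]
  rfl

lemma natCast_bijective (L : ℕ) [NeZero L] :
    Function.Bijective fun j : Fin L => ((j : ℕ) : ZMod L) := by
  refine (Fintype.bijective_iff_injective_and_card _).mpr ⟨fun i j hij => ?_, by simp [ZMod.card]⟩
  have := congrArg ZMod.val hij
  simpa [ZMod.val_natCast_of_lt i.isLt, ZMod.val_natCast_of_lt j.isLt, Fin.ext_iff] using this

lemma sites_nodup (L : ℕ) [NeZero L] : (sites L).Nodup :=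
  (List.nodup_finRange L).map (natCast_bijective L).injective

lemma prod_sites (L : ℕ) [NeZero L] (g : ZMod L → ℂ) :
    ((sites L).map g).prod = ∏ j : ZMod L, g j := by
  rw [sites, List.map_map, ← Fin.prod_univ_def]
  exact Fintype.prod_bijective _ (natCast_bijective L) _ _ fun _ => rfl

lemma mono_eq (N L : ℕ) [NeZero N] [NeZero L] (ω : ℂ) (h : ZMod L → ℂ × ℂ × ℂ × ℂ) (x : ℂ) :
    mono N L ω h x = ((sites L).map fun m => (Lop N ω (h m) x).map (emb N L m)).prod := by
  -- The index list of `mono` is `List.finRange L` coerced entrywise to `ℕ`, that is `List.range L`.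
  simp [mono, sites_eq_map_range, Function.comp_def, ← List.map_eq_flatMap]

lemma transfer_mem_parityPoly (N L : ℕ) [NeZero N] [NeZero L] (ω : ℂ)
    (h : ZMod L → ℂ × ℂ × ℂ × ℂ) :
    transfer N L ω h ∈ parityPoly (Matrix (ZMod L → ZMod N) (ZMod L → ZMod N) ℂ) L 0 := by
  have h0 := list_prod_mem_parityPoly N L ω h (sites L) 0 0
  have h1 := list_prod_mem_parityPoly N L ω h (sites L) 1 1
  have hlen : (sites L).length = L := by simp [sites]
  rw [hlen] at h0 h1
  have h1' : parityPoly (Matrix (ZMod L → ZMod N) (ZMod L → ZMod N) ℂ) L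
      (((1 : Fin 2) : ℕ) + ((1 : Fin 2) : ℕ)) ≤ parityPoly _ L 0 :=
    Submodule.span_mono fun f ⟨k, r, hk, hp, hf⟩ => ⟨k, r, hk, by simp at hp; omega, hf⟩
  have := Submodule.add_mem _ h0 (h1' h1)
  simp only [← mono_eq] at this
  exact this

lemma transfer_zero (N L : ℕ) [NeZero N] [NeZero L] (ω : ℂ) (h : ZMod L → ℂ × ℂ × ℂ × ℂ) :
    transfer N L ω h 0 =
      (∏ j, (h j).1) • ((sites L).map fun m => emb N L m (Yop N ω)).prod +
        (∏ j, (h j).2.2.2) • (1 : Matrix (ZMod L → ZMod N) (ZMod L → ZMod N) ℂ) := by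
  rw [transfer, mono_eq, list_prod_zero, prod_sites, prod_sites]
  simp

/-- the eigenvalue `Λ` of the transfer-matrix family on a common left
eigenvector is an even polynomial of degree at most `2⌊L/2⌋` with
`Λ(0) = q^s ∏ a_j + ∏ d_j` for some integer `s`. -/
theorem transfer_eigenvalue_polynomial (M L : ℕ) [NeZero L] (hM : 1 ≤ M) (ω : ℂ)
    (hω : IsPrimitiveRoot ω (2 * M + 1)) (q : ℂ) (hq : q = ω ^ (M + 1))
    (h : ZMod L → ℂ × ℂ × ℂ × ℂ)
    (φ : ((ZMod L → ZMod (2 * M + 1)) → ℂ) →ₗ[ℂ] ℂ) (hφ0 : φ ≠ 0) (Λ : ℂ → ℂ)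
    (hφ : ∀ (x : ℂ) (w : (ZMod L → ZMod (2 * M + 1)) → ℂ),
      φ ((transfer (2 * M + 1) L ω h x).mulVec w) = Λ x * φ w) :
    (∃ P : Polynomial ℂ, (∀ x : ℂ, Λ x = P.eval x) ∧ P.natDegree ≤ 2 * (L / 2)) ∧
    (∀ x : ℂ, Λ (-x) = Λ x) ∧
    (∃ s : ℤ, Λ 0 = q ^ s * (∏ j : ZMod L, (h j).1) + ∏ j : ZMod L, (h j).2.2.2) := by
  have hωN : ω ^ (2 * M + 1) = 1 := hω.pow_eq_one
  obtain ⟨w, hw⟩ : ∃ w, φ w = 1 := by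
    obtain ⟨v, hv⟩ : ∃ v, φ v ≠ 0 := by
      by_contra! hc
      exact hφ0 (LinearMap.ext hc)
    exact ⟨(φ v)⁻¹ • v, by simp [hv]⟩
  have hT := transfer_mem_parityPoly (2 * M + 1) L ω h
  have hΛ : ∀ x, Λ x = φ (transfer (2 * M + 1) L ω h x *ᵥ w) := fun x => by
    rw [hφ, hw, mul_one]
  refine ⟨?_, fun x => ?_, ?_⟩
  · obtain ⟨P, hP, hPd⟩ := exists_polynomial_of_mem_parityPoly hT
      (φ ∘ₗ (Matrix.mulVecBilin ℂ ℂ).flip w)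
    exact ⟨P, fun x => by rw [hΛ, ← hP]; rfl, hPd⟩
  · rw [hΛ, hΛ, even_of_mem_parityPoly hT]
  · by_cases ha : ∏ j : ZMod L, (h j).1 = 0
    · refine ⟨0, ?_⟩
      rw [hΛ, transfer_zero, ha]
      simp [Matrix.smul_mulVec, hw]
    · set U := ((sites L).map fun m => emb (2 * M + 1) L m (Yop (2 * M + 1) ω)).prod with hU
      have hUN : U ^ (2 * M + 1) = 1 := list_prod_emb_Yop_pow M L ω hωN _ (sites_nodup L)
      set μ := (Λ 0 - ∏ j : ZMod L, (h j).2.2.2) / ∏ j : ZMod L, (h j).1 with hμ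
      have hUφ : ∀ v, φ (U *ᵥ v) = μ * φ v := fun v => by
        have := hφ 0 v
        rw [transfer_zero, ← hU] at this
        simp only [Matrix.add_mulVec, Matrix.smul_mulVec, Matrix.one_mulVec, map_add, map_smul,
          smul_eq_mul] at this
        rw [hμ]
        field_simp
        linear_combination this
      have hpow : ∀ n v, φ ((U ^ n) *ᵥ v) = μ ^ n * φ v := fun n => by
        induction n with
        | zero => simp
        | succ n ih =>
          intro v
          rw [pow_succ, ← Matrix.mulVec_mulVec, ih, hUφ]
          ring
      have hμN : μ ^ (2 * M + 1) = 1 := by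
        have := hpow (2 * M + 1) w
        rwa [hUN, Matrix.one_mulVec, hw, mul_one, eq_comm] at this
      obtain ⟨i, -, hi⟩ := hω.eq_pow_of_pow_eq_one hμN
      -- `q ^ 2 = ω ^ (2 * M + 2) = ω`
      have hq2 : q ^ 2 = ω := by
        rw [hq, ← pow_mul, show (M + 1) * 2 = 2 * M + 1 + 1 by ring, pow_succ, hωN, one_mul]
      refine ⟨((2 * i : ℕ) : ℤ), ?_⟩
      rw [zpow_natCast, pow_mul, hq2, hi, hμ]
      field_simp
      ring

end
end

section
/- (Totally degenerate spectral curve) With a_j := q⁻¹d_j, b_j := q⁻¹c_j, d_j ≠ 0, and c*_j := c_j/d_j ≠ 0 for j = 0,…,L−1: for every x ∈ ℂ and l ∈ ℤ the point p = (x, q^l, q^l, …, q^l) lies on the spectral curve C_{h⃗} (where C_{h⃗} is defined by ξ_j^N(ξ_{j+1}^N x^N c_j^N − d_j^N) = (−1)^N(ξ_{j+1}^N a_j^N − x^N b_j^N) for all j, with ξ_L = ξ₀); moreover, whenever p is nondegenerate (i.e. q^l x c_j ω^m − d_j ≠ 0 and q^l a_j − x b_j ≠ 0 for all j, m), the vector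 |x,l⟩ defined by the explicit q-shifted-factorial component formula coincides with the Baxter vector |p⟩ determined by ⟨0|p_j⟩ = 1 and ⟨m|p_j⟩ = ⟨m−1|p_j⟩·(q^l a_j ω^m − x b_j)/(−q^l(q^l x c_j ω^m − d_j)) for all m ∈ ℤ. -/
/-!
The defining recursion pins down each local factor of the Baxter vector from its value
at `0`, so it suffices to compare ratios of consecutive components. Put `t = x c*_j`. Dividing
numerator and denominator by `d_j` and using `q² = ω`, the Baxter ratio at `m = n + 1` becomes
`q^{2n+1} (1 - t q^{-l-2} ω^{-n}) / (1 - t q^{l+2} ω^n)` (`baxter_ratio`), which is exactly the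
ratio of consecutive terms of `q^{n²} (t q^{-l-2}; ω⁻¹)_n / (t q^{l+2}; ω)_n`. Induction on
`n < N` gives the local identity (`local_factor`), and the vectors are the products over `j`.
The curve equation holds because `q^N = 1` and `N` is odd.
-/

open Matrix Polynomial

noncomputable section

/-- The spectral curve `C_{h⃗}`: the set of points `(x, ξ₀,…,ξ_{L−1})` with
`ξ_j^N (ξ_{j+1}^N x^N c_j^N − d_j^N) = (−1)^N (ξ_{j+1}^N a_j^N − x^N b_j^N)` for all `j`
(cyclically). -/
def onCurve (N L : ℕ) [NeZero L] (a b c d : ZMod L → ℂ) (x : ℂ) (ξ : ZMod L → ℂ) : Prop :=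
  ∀ j : ZMod L,
    ξ j ^ N * (ξ (j + 1) ^ N * x ^ N * c j ^ N - d j ^ N) =
      (-1 : ℂ) ^ N * (ξ (j + 1) ^ N * a j ^ N - x ^ N * b j ^ N)

/-- A point of the spectral curve is nondegenerate if `ξ_j ≠ 0`,
`ξ_{j+1}a_j − xb_j ≠ 0` and `ξ_{j+1}xc_jω^m − d_j ≠ 0` for all `j` and all `m ∈ ℤ/N`. -/
def nondeg (N L : ℕ) [NeZero L] (ω : ℂ) (a b c d : ZMod L → ℂ) (x : ℂ)
    (ξ : ZMod L → ℂ) : Prop :=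
  ∀ j : ZMod L, ξ j ≠ 0 ∧ ξ (j + 1) * a j - x * b j ≠ 0 ∧
    ∀ m : ZMod N, ξ (j + 1) * x * c j * ω ^ m.val - d j ≠ 0

/-- `v j` is the `j`-th local factor `|p_j⟩` of the Baxter vector at
`p = (x, ξ₀,…,ξ_{L−1})`: the vector with `⟨0|p_j⟩ = 1` and
`⟨m|p_j⟩ = ⟨m−1|p_j⟩·(ξ_{j+1}a_jω^m − xb_j)/(−ξ_j(ξ_{j+1}xc_jω^m − d_j))` for all `m`. -/
def isBaxterFamily (N L : ℕ) [NeZero L] (ω : ℂ) (a b c d : ZMod L → ℂ) (x : ℂ)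
    (ξ : ZMod L → ℂ) (v : ZMod L → ZMod N → ℂ) : Prop :=
  ∀ j : ZMod L, v j 0 = 1 ∧ ∀ m : ZMod N,
    v j m = v j (m - 1) *
      ((ξ (j + 1) * a j * ω ^ m.val - x * b j) /
        (-(ξ j) * (ξ (j + 1) * x * c j * ω ^ m.val - d j)))

/-- The Baxter vector `|p⟩ = |p₀⟩ ⊗ ⋯ ⊗ |p_{L−1}⟩ ∈ ⊗^L ℂ^N` assembled from the
local factors `v j = |p_j⟩`. -/
def baxVec (N L : ℕ) [NeZero L] (v : ZMod L → ZMod N → ℂ) : (ZMod L → ZMod N) → ℂ :=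
  fun k => ∏ j : ZMod L, v j (k j)

/-- The q-shifted factorial `(a; s)_n = (1−a)(1−as)⋯(1−as^{n−1})`. -/
def qsf (a s : ℂ) (n : ℕ) : ℂ :=
  ∏ i ∈ Finset.range n, (1 - a * s ^ i)

/-- The vector `|x,l⟩ ∈ ⊗^Lℂ^N` with components
`⟨k₀,…,k_{L−1}|x,l⟩ = q^{Σk_j²} ∏_j (xc*_jq^{−l−2};ω⁻¹)_{k_j}/(xc*_jq^{l+2};ω)_{k_j}`. -/
def ket (N L : ℕ) [NeZero L] (ω q : ℂ) (cstar : ZMod L → ℂ) (x : ℂ) (l : ℤ) :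
    (ZMod L → ZMod N) → ℂ :=
  fun k => q ^ (∑ j : ZMod L, ((k j).val) ^ 2) *
    ∏ j : ZMod L,
      qsf (x * cstar j * q ^ (-l - 2)) ω⁻¹ ((k j).val) /
        qsf (x * cstar j * q ^ (l + 2)) ω ((k j).val)

/-- The `(n+1)`-st ratio of local Baxter components on the degenerate curve, written as the ratio
of consecutive terms of the q-shifted-factorial formula. It holds even when the denominator
`1 - t q^{l+2} ω^n` vanishes, both sides then being `0`. -/
lemma baxter_ratio (ω q c d x : ℂ) (l : ℤ) (n : ℕ) (hq0 : q ≠ 0) (hω : ω = q ^ 2)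
    (hd : d ≠ 0) :
    (q ^ l * (q⁻¹ * d) * ω ^ (n + 1) - x * (q⁻¹ * c)) /
        (-(q ^ l) * (q ^ l * x * c * ω ^ (n + 1) - d)) =
      q ^ (2 * n + 1) * (1 - x * (c / d) * q ^ (-l - 2) * ω⁻¹ ^ n) /
        (1 - x * (c / d) * q ^ (l + 2) * ω ^ n) := by
  have hl : q ^ l ≠ 0 := zpow_ne_zero l hq0
  have e1 : q ^ (-l - 2) = (q ^ l)⁻¹ * (q ^ 2)⁻¹ := by
    rw [zpow_sub₀ hq0, _root_.zpow_neg, div_eq_mul_inv]; norm_cast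
  have e2 : q ^ (l + 2) = q ^ l * q ^ 2 := by
    rw [zpow_add₀ hq0]; norm_cast
  rw [e1, e2, hω]
  generalize q ^ l = y at *
  have hn : q ^ (2 * n + 1) = q * (q ^ 2) ^ n := by rw [pow_succ', pow_mul]
  have hw : (q ^ 2) ^ n ≠ 0 := pow_ne_zero _ (pow_ne_zero _ hq0)
  rw [hn, inv_pow, pow_succ]
  generalize (q ^ 2) ^ n = w at *
  -- Both numerator and denominator carry the common factor `y * d`.
  have hnum : y * (q⁻¹ * d) * (w * q ^ 2) - x * (q⁻¹ * c) =
      (y * d) * (q * w * (1 - x * (c / d) * (y⁻¹ * (q ^ 2)⁻¹) * w⁻¹)) := by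
    field_simp
  have hden : -y * (y * x * c * (w * q ^ 2) - d) =
      (y * d) * (1 - x * (c / d) * (y * q ^ 2) * w) := by
    field_simp
    ring
  rw [hnum, hden, mul_div_mul_left _ _ (mul_ne_zero hl hd)]

/-- A function on `ZMod N` with value `1` at `0` and the degenerate Baxter ratios is given by the
q-shifted-factorial formula. -/
lemma local_factor (N : ℕ) (ω q c d x : ℂ) (l : ℤ) (hq0 : q ≠ 0) (hω : ω = q ^ 2)
    (hd : d ≠ 0) (u : ZMod N → ℂ) (h0 : u 0 = 1)
    (hu : ∀ m : ZMod N, u m = u (m - 1) *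
      ((q ^ l * (q⁻¹ * d) * ω ^ m.val - x * (q⁻¹ * c)) /
        (-(q ^ l) * (q ^ l * x * c * ω ^ m.val - d)))) (n : ℕ) (hn : n < N) :
    u (n : ZMod N) = q ^ n ^ 2 *
      (qsf (x * (c / d) * q ^ (-l - 2)) ω⁻¹ n / qsf (x * (c / d) * q ^ (l + 2)) ω n) := by
  induction n with
  | zero => simp [qsf, h0]
  | succ n ih =>
    rw [hu, ZMod.val_cast_of_lt hn, baxter_ratio ω q c d x l n hq0 hω hd]
    have hp : ((n + 1 : ℕ) : ZMod N) - 1 = (n : ZMod N) := by push_cast; ring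
    have hs : q ^ (n + 1) ^ 2 = q ^ n ^ 2 * q ^ (2 * n + 1) := by
      rw [← pow_add]; congr 1; ring
    rw [hp, ih (by omega), hs]
    simp only [qsf, Finset.prod_range_succ, div_eq_mul_inv, mul_inv]
    ring

/-- totally degenerate spectral curve: with `a_j = q⁻¹d_j`,
`b_j = q⁻¹c_j`, `d_j ≠ 0` and `c*_j = c_j/d_j ≠ 0`, the point `(x, q^l,…,q^l)` lies
on the spectral curve, and at every nondegenerate such point the Baxter vector
coincides with the vector `|x,l⟩` given by the q-shifted-factorial formula. -/
theorem degenerate_curve_baxter_vector (M L : ℕ) [NeZero L] (hM : 1 ≤ M) (ω : ℂ)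
    (hω : IsPrimitiveRoot ω (2 * M + 1)) (q : ℂ) (hq : q = ω ^ (M + 1))
    (a b c d cstar : ZMod L → ℂ)
    (ha : ∀ j, a j = q⁻¹ * d j) (hb : ∀ j, b j = q⁻¹ * c j)
    (hd : ∀ j, d j ≠ 0) (hcstar : ∀ j, cstar j = c j / d j)
    (hcs0 : ∀ j, cstar j ≠ 0) (x : ℂ) (l : ℤ) :
    onCurve (2 * M + 1) L a b c d x (fun _ => q ^ l) ∧
    (nondeg (2 * M + 1) L ω a b c d x (fun _ => q ^ l) →
      ∀ v : ZMod L → ZMod (2 * M + 1) → ℂ,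
        isBaxterFamily (2 * M + 1) L ω a b c d x (fun _ => q ^ l) v →
          baxVec (2 * M + 1) L v = ket (2 * M + 1) L ω q cstar x l) := by
  have hω1 : ω ^ (2 * M + 1) = 1 := hω.pow_eq_one
  have hω0 : ω ≠ 0 := hω.ne_zero (by omega)
  have hq0 : q ≠ 0 := hq ▸ pow_ne_zero _ hω0
  have hq2 : ω = q ^ 2 := by
    rw [hq, ← pow_mul, show (M + 1) * 2 = (2 * M + 1) + 1 by ring, pow_succ, hω1, one_mul]
  have hqN : q ^ (2 * M + 1) = 1 := by rw [hq, ← pow_mul, mul_comm, pow_mul, hω1, one_pow]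
  refine ⟨fun j => ?_, fun _ v hv => ?_⟩
  · have hl : (q ^ l) ^ (2 * M + 1) = 1 := by
      rw [← zpow_natCast, zpow_comm, zpow_natCast, hqN, _root_.one_zpow]
    have hodd : (-1 : ℂ) ^ (2 * M + 1) = -1 := Odd.neg_one_pow ⟨M, rfl⟩
    simp only [hl, hodd, ha, hb, mul_pow, inv_pow, hqN]
    ring
  · funext k
    simp only [baxVec, ket]
    rw [← Finset.prod_pow_eq_pow_sum, ← Finset.prod_mul_distrib]
    refine Finset.prod_congr rfl fun j _ => ?_
    obtain ⟨h0, hrec⟩ := hv j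
    simp only [ha, hb] at hrec
    have h := local_factor (2 * M + 1) ω q (c j) (d j) x l hq0 hq2 (hd j) (v j) h0 hrec
      (k j).val (ZMod.val_lt _)
    rw [ZMod.natCast_zmod_val] at h
    rw [h, hcstar]

end
end

section
/- For every l ∈ ℤ and every x ∈ ℂ such that all components of |x,l⟩, |q⁻¹x, l−1⟩, |qx, l−1⟩ are defined and 1 − xc*_jq^{−l} ≠ 0 for all j, the normalized transfer matrix satisfies T(x)·|x,l⟩ = Δ₋(x,l)·|q⁻¹x, l−1⟩ + Δ₊(x,l)·|qx, l−1⟩, where Δ₋(x,l) := ∏_{j=0}^{L−1}(1 − xc*_jq^{l}) and Δ₊(x,l) := ∏_{j=0}^{L−1}(1 − x²c*_j²)/(1 − xc*_jq^{−l}). -/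
/-!
The operator identity reduces to one-site computations.

A ket `|x, l⟩` is a product vector: its factor at site `j` is `site` with `u = x c*_j`,
`a = q^l`, i.e. `φ(k) = q^{k²} (u a⁻¹ ω⁻¹; ω⁻¹)_k / (u a ω; ω)_k`. On a product vector the
monodromy matrix acts, componentwise, through an ordinary product of numerical `2 × 2` matrices
`W_j`, whose entries are the components at `k_j` of the four operators of the `L`-operator applied
to `φ` (`prod_emb_mulVec`, `transfer_mulVec_prod`).

The recursion `φ(k) (1 - u a ω^k) = q⁻¹ (ω^k - u a⁻¹) φ(k - 1)` (`site_rec`) says exactly that the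
vector `(1, -a⁻¹)ᵀ` is an eigenvector of every `W_j`. As `a = q^l` does not depend on the site,
one conjugation triangularizes all `W_j` together, and the trace of the product is the sum of the
two products of diagonal entries (`trace_prod_of_triangular`). These diagonal entries are the
factors of `Δ₋(x, l) |q⁻¹x, l - 1⟩` (`site_minus`) and `Δ₊(x, l) |qx, l - 1⟩` (`site_plus`).

At `k = 0` the recursion wraps around to `k = N - 1`; it persists there because
`(u a⁻¹; ω⁻¹)_N = 1 - u^N = (u a; ω)_N` (`site_neg_one`).
-/


open Matrix Polynomial

noncomputable section

/-- All denominators occurring in the components of `|x,l⟩` are nonzero. -/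
def ketDefined (N L : ℕ) [NeZero L] (ω q : ℂ) (cstar : ZMod L → ℂ) (x : ℂ) (l : ℤ) :
    Prop :=
  ∀ (j : ZMod L) (n : ℕ), n < N → qsf (x * cstar j * q ^ (l + 2)) ω n ≠ 0

/-- `f^e(x,2n) = ∏_j (xc*_j;ω⁻¹)_{n+1}/(xc*_j;ω)_{n+1}`. -/
def fe (L : ℕ) [NeZero L] (ω : ℂ) (cstar : ZMod L → ℂ) (x : ℂ) (n : ℕ) : ℂ :=
  ∏ j : ZMod L, qsf (x * cstar j) ω⁻¹ (n + 1) / qsf (x * cstar j) ω (n + 1)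

/-- `f^o(x,2n+1) = ∏_j (xc*_jq⁻¹;ω⁻¹)_{n+1}/(xc*_jq;ω)_{n+1}`. -/
def fo (L : ℕ) [NeZero L] (ω q : ℂ) (cstar : ZMod L → ℂ) (x : ℂ) (n : ℕ) : ℂ :=
  ∏ j : ZMod L, qsf (x * cstar j * q⁻¹) ω⁻¹ (n + 1) / qsf (x * cstar j * q) ω (n + 1)

/-- `|x⟩ᵉ_l = Σ_{n=0}^{N−1} |x,2n⟩ f^e(x,2n) ω^{ln}`. -/
def kete (N L : ℕ) [NeZero L] (ω q : ℂ) (cstar : ZMod L → ℂ) (x : ℂ) (l : ℤ) :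
    (ZMod L → ZMod N) → ℂ :=
  ∑ n ∈ Finset.range N,
    (fe L ω cstar x n * ω ^ (l * (n : ℤ))) • ket N L ω q cstar x (2 * (n : ℤ))

/-- `|x⟩ᵒ_l = Σ_{n=0}^{N−1} |x,2n+1⟩ f^o(x,2n+1) ω^{ln}`. -/
def keto (N L : ℕ) [NeZero L] (ω q : ℂ) (cstar : ZMod L → ℂ) (x : ℂ) (l : ℤ) :
    (ZMod L → ZMod N) → ℂ :=
  ∑ n ∈ Finset.range N,
    (fo L ω q cstar x n * ω ^ (l * (n : ℤ))) • ket N L ω q cstar x (2 * (n : ℤ) + 1)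

/-- `u(x) = ∏_j (1−x^Nc*_j^N)(xc*_jq;q²)_M`. -/
def uu (N M L : ℕ) [NeZero L] (q : ℂ) (cstar : ZMod L → ℂ) (x : ℂ) : ℂ :=
  ∏ j : ZMod L, (1 - x ^ N * cstar j ^ N) * qsf (x * cstar j * q) (q ^ 2) M

/-- `|x⟩⁺_l = |x⟩ᵉ_l q^{−l} u(qx) + |x⟩ᵒ_l u(x)`. -/
def ketp (N M L : ℕ) [NeZero L] (ω q : ℂ) (cstar : ZMod L → ℂ) (x : ℂ) (l : ℤ) :
    (ZMod L → ZMod N) → ℂ :=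
  (q ^ (-l) * uu N M L q cstar (q * x)) • kete N L ω q cstar x l +
    uu N M L q cstar x • keto N L ω q cstar x l

/-- All the q-shifted-factorial denominators occurring in `|x⟩ᵉ_l`, `|x⟩ᵒ_l`
(hence in `|x⟩⁺_l`) are nonzero. -/
def allDef (N L : ℕ) [NeZero L] (ω q : ℂ) (cstar : ZMod L → ℂ) (x : ℂ) : Prop :=
  (∀ n : ℕ, n < N → ketDefined N L ω q cstar x (2 * (n : ℤ)) ∧
      ketDefined N L ω q cstar x (2 * (n : ℤ) + 1)) ∧
  ∀ (j : ZMod L) (n : ℕ), n < N →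
    qsf (x * cstar j) ω (n + 1) ≠ 0 ∧ qsf (x * cstar j * q) ω (n + 1) ≠ 0

/-- The one-site factor `k ↦ q^{k²} (p; ω⁻¹)_k / (r; ω)_k` of a Baxter vacuum vector, as a vector
of `ℂ^N`; the index `k` runs over the representatives `0, …, N - 1`. -/
def site (N : ℕ) (ω q p r : ℂ) : ZMod N → ℂ :=
  fun k => q ^ (k.val ^ 2) * (qsf p ω⁻¹ k.val / qsf r ω k.val)

lemma ket_eq_prod (N L : ℕ) [NeZero L] (ω q : ℂ) (cstar : ZMod L → ℂ) (x : ℂ) (l : ℤ)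
    (k : ZMod L → ZMod N) :
    ket N L ω q cstar x l k =
      ∏ j, site N ω q (x * cstar j * q ^ (-l - 2)) (x * cstar j * q ^ (l + 2)) (k j) := by
  simp only [ket, site, Finset.prod_mul_distrib, Finset.prod_pow_eq_pow_sum]

/-! ### Operators acting on tensor products -/

lemma emb_mulVec {N L : ℕ} [NeZero N] [NeZero L] (j : ZMod L)
    (A : Matrix (ZMod N) (ZMod N) ℂ) (f : (ZMod L → ZMod N) → ℂ) (k : ZMod L → ZMod N) :
    (emb N L j A).mulVec f k = ∑ m, A (k j) m * f (Function.update k j m) := by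
  classical
  simp only [Matrix.mulVec, dotProduct, emb, Matrix.of_apply]
  symm
  refine Finset.sum_of_injOn (fun m => Function.update k j m) ?_ ?_ ?_ ?_
  · intro a _ b _ h
    simpa using congrFun h j
  · intro a _
    simp
  · intro k' _ hk'
    -- a configuration that is not an update of `k` at `j` differs from `k` off `j`
    have : ∃ i, i ≠ j ∧ k i ≠ k' i := by
      by_contra! hcon
      apply hk'
      refine ⟨k' j, by simp, ?_⟩
      funext i
      by_cases hi : i = j
      · subst hi; simp
      · simp [hi, hcon i hi]
    obtain ⟨i, hij, hi⟩ := this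
    rw [Finset.prod_eq_zero (Finset.mem_erase.2 ⟨hij, Finset.mem_univ i⟩) (by simp [hi])]
    simp
  · intro m _
    rw [Finset.prod_eq_one]
    · simp
    · intro i hi
      simp [Finset.ne_of_mem_erase hi]

/-- A product of `2 × 2` operator matrices attached to distinct sites, applied entrywise to a
product vector `⨂ v_j` and evaluated at `k`, is the product of the numerical `2 × 2` matrices
`(A_j v_j)(k_j)`, times the components of the untouched factors. -/
lemma prod_emb_mulVec {N L : ℕ} [NeZero N] [NeZero L]
    (A : ZMod L → Matrix (Fin 2) (Fin 2) (Matrix (ZMod N) (ZMod N) ℂ))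
    (v : ZMod L → ZMod N → ℂ) (s : List (ZMod L)) (hs : s.Nodup) (a b : Fin 2)
    (k : ZMod L → ZMod N) :
    ((s.map fun j => (A j).map (emb N L j)).prod a b).mulVec (fun k => ∏ j, v j (k j)) k =
      ((s.map fun j => (A j).map fun B => B.mulVec (v j) (k j)).prod a b) *
        ∏ i ∈ Finset.univ.filter (· ∉ s), v i (k i) := by
  classical
  induction s generalizing a b k with
  | nil =>
    rcases eq_or_ne a b with rfl | h
    · simp
    · simp [Matrix.one_apply_ne h]
  | cons j s ih =>
    obtain ⟨hj, hs⟩ := List.nodup_cons.1 hs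
    have hset : Finset.univ.filter (· ∉ s) =
        insert j (Finset.univ.filter (· ∉ j :: s)) := by
      ext i
      by_cases h : i = j
      · subst h; simp [hj]
      · simp [h]
    have hupd (m : ZMod N) :
        (s.map fun i => (A i).map fun B => B.mulVec (v i) (Function.update k j m i)) =
          s.map fun i => (A i).map fun B => B.mulVec (v i) (k i) := by
      refine List.map_congr_left fun i hi => ?_
      have : i ≠ j := fun h => hj (h ▸ hi)
      simp [this]
    have hrest (m : ZMod N) :
        ∏ i ∈ Finset.univ.filter (· ∉ s), v i (Function.update k j m i) =
          v j m * ∏ i ∈ Finset.univ.filter (· ∉ j :: s), v i (k i) := by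
      rw [hset, Finset.prod_insert (by simp)]
      congr 1
      · simp
      · refine Finset.prod_congr rfl fun i hi => ?_
        have : i ≠ j := by
          rintro rfl
          simp at hi
        simp [this]
    rw [List.map_cons, List.prod_cons, List.map_cons, List.prod_cons, Matrix.mul_apply,
      Matrix.mul_apply, Matrix.sum_mulVec, Finset.sum_apply, Finset.sum_mul]
    refine Finset.sum_congr rfl fun c _ => ?_
    rw [← Matrix.mulVec_mulVec, Matrix.map_apply, emb_mulVec]
    simp_rw [ih hs, hupd, hrest, Matrix.map_apply, Matrix.mulVec, dotProduct, Finset.sum_mul]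
    refine Finset.sum_congr rfl fun m _ => ?_
    ring

/-! ### Simultaneous triangularization of the auxiliary matrices -/

/-- If `(1, t)ᵀ` is a common eigenvector of the matrices `W_j`, as expressed by `hW`, then
conjugation by `!![1, 0; t, 1]` makes them all upper triangular, so the trace of their product
is the sum of the products of the two diagonal entries. -/
lemma trace_prod_of_triangular {ι : Type*} (W : ι → Matrix (Fin 2) (Fin 2) ℂ) (t : ℂ)
    (hW : ∀ j, W j 1 0 + t * W j 1 1 = t * (W j 0 0 + t * W j 0 1)) (s : List ι) :
    (s.map W).prod 0 0 + (s.map W).prod 1 1 =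
      (s.map fun j => W j 0 0 + t * W j 0 1).prod +
        (s.map fun j => W j 1 1 - t * W j 0 1).prod := by
  have key : (s.map W).prod 0 0 + t * (s.map W).prod 0 1 =
        (s.map fun j => W j 0 0 + t * W j 0 1).prod ∧
      (s.map W).prod 1 1 - t * (s.map W).prod 0 1 =
        (s.map fun j => W j 1 1 - t * W j 0 1).prod ∧
      (s.map W).prod 1 0 + t * (s.map W).prod 1 1 =
        t * ((s.map W).prod 0 0 + t * (s.map W).prod 0 1) := by
    induction s with
    | nil => simp
    | cons j s ih =>
      obtain ⟨h1, h2, h3⟩ := ih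
      simp only [List.map_cons, List.prod_cons, Matrix.mul_apply, Fin.sum_univ_two]
      rw [← h1, ← h2]
      generalize (s.map W).prod = P at *
      have hj := hW j
      refine ⟨?_, ?_, ?_⟩
      · linear_combination W j 0 1 * h3
      · linear_combination P 0 1 * hj
      · linear_combination (W j 1 1 - t * W j 0 1) * h3 + (P 0 0 + t * P 0 1) * hj
  linear_combination key.1 + key.2.1

/-! ### One-site computations -/

lemma Xop_mulVec (N : ℕ) [NeZero N] (v : ZMod N → ℂ) (k : ZMod N) :
    (Xop N).mulVec v k = v (k - 1) := by
  simp [Matrix.mulVec, dotProduct, Xop]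

lemma Zop_mulVec (N : ℕ) [NeZero N] (ω : ℂ) (v : ZMod N → ℂ) (k : ZMod N) :
    (Zop N ω).mulVec v k = ω ^ k.val * v k := by
  simp [Zop, Matrix.mulVec_diagonal]

lemma Yop_mulVec (N : ℕ) [NeZero N] (ω : ℂ) (v : ZMod N → ℂ) (k : ZMod N) :
    (Yop N ω).mulVec v k = ω ^ k.val * v (k - 1) := by
  rw [Yop, ← Matrix.mulVec_mulVec, Zop_mulVec, Xop_mulVec]

lemma qsf_succ (a s : ℂ) (n : ℕ) : qsf a s (n + 1) = qsf a s n * (1 - a * s ^ n) := by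
  rw [qsf, Finset.prod_range_succ, qsf]

lemma qsf_succ' (a s : ℂ) (n : ℕ) : qsf a s (n + 1) = (1 - a) * qsf (a * s) s n := by
  rw [qsf, Finset.prod_range_succ', qsf, mul_comm]
  simp only [pow_zero, mul_one, pow_succ']
  congr 1
  exact Finset.prod_congr rfl fun i _ => by ring

/-- A full period of a `q`-shifted factorial at a root of unity: `(a; ζ)_N = 1 - a^N`. -/
lemma qsf_full {N : ℕ} (hN : 0 < N) {ζ : ℂ} (hζ : IsPrimitiveRoot ζ N) (a : ℂ) :
    qsf a ζ N = 1 - a ^ N := by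
  have : NeZero N := ⟨hN.ne'⟩
  have h := hζ.pow_sub_pow_eq_prod_sub_mul 1 a hN
  rw [one_pow] at h
  rw [h, qsf]
  refine Finset.prod_bij (fun i _ => ζ ^ i) ?_ ?_ ?_ ?_
  · intro i _
    rw [Polynomial.mem_nthRootsFinset hN, ← pow_mul, mul_comm, pow_mul, hζ.pow_eq_one, one_pow]
  · intro i hi j hj hij
    exact hζ.pow_inj (Finset.mem_range.1 hi) (Finset.mem_range.1 hj) hij
  · intro z hz
    rw [Polynomial.mem_nthRootsFinset hN] at hz
    obtain ⟨i, hi, rfl⟩ := hζ.eq_pow_of_pow_eq_one hz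
    exact ⟨i, Finset.mem_range.2 hi, rfl⟩
  · intro i _
    ring

section Site

variable {N : ℕ} [NeZero N] {ω q u a : ℂ}

lemma val_sub_one {k : ZMod N} {n : ℕ} (hk : k.val = n + 1) : (k - 1).val = n := by
  have hN : n + 1 < N := hk ▸ ZMod.val_lt k
  have hkn : k = ((n + 1 : ℕ) : ZMod N) := by rw [← hk, ZMod.natCast_zmod_val]
  rw [hkn, Nat.cast_add, Nat.cast_one, add_sub_cancel_right, ZMod.val_natCast,
    Nat.mod_eq_of_lt (by omega)]

lemma val_neg_one' {n : ℕ} (hN : N = n + 1) : (-1 : ZMod N).val = n := by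
  subst hN
  exact ZMod.val_neg_one n

/-- The value of the site vector at `-1`, where the cyclic structure of the index matters: it
is read off from the full-period identities `(ua⁻¹; ω⁻¹)_N = 1 - u^N = (ua; ω)_N`, valid because
`a^N = 1`. -/
lemma site_neg_one (hω : IsPrimitiveRoot ω N) (hqN : q ^ N = 1)
    (haN : a ^ N = 1) (hr : ∀ n < N, qsf (u * (a * ω)) ω n ≠ 0) (hden : 1 - u * a⁻¹ ≠ 0) :
    site N ω q (u * (a⁻¹ * ω⁻¹)) (u * (a * ω)) (-1) = q * (1 - u * a) / (1 - u * a⁻¹) := by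
  obtain ⟨n, hn⟩ : ∃ n, N = n + 1 := Nat.exists_eq_succ_of_ne_zero (NeZero.ne N)
  have hN : 0 < N := by omega
  have h1 := qsf_full hN hω.inv (u * a⁻¹)
  have h2 := qsf_full hN hω (u * a)
  rw [mul_pow, inv_pow, haN, inv_one, mul_one] at h1
  rw [mul_pow, haN, mul_one, ← h1] at h2
  rw [hn, qsf_succ', qsf_succ', mul_assoc, mul_assoc] at h2
  have hr' := hr n (by omega)
  have hqq : q ^ (n ^ 2) = q := by
    rcases n with _ | n
    · rw [hn] at hqN
      simpa using hqN.symm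
    · have : (n + 1) ^ 2 = N * n + 1 := by rw [hn]; ring
      rw [this, pow_succ, pow_mul, hqN, one_pow, one_mul]
  rw [site, val_neg_one' hn, hqq]
  rw [eq_div_iff hden, ← mul_div_assoc, div_mul_eq_mul_div, div_eq_iff hr']
  linear_combination -q * h2

/-- The first-order recursion of the site vector, valid cyclically, i.e. also at `k = 0`. -/
lemma site_rec (hω : IsPrimitiveRoot ω N) (hq2 : q ^ 2 = ω) (hq0 : q ≠ 0) (hqN : q ^ N = 1)
    (haN : a ^ N = 1) (hr : ∀ n < N, qsf (u * (a * ω)) ω n ≠ 0) (hden : 1 - u * a⁻¹ ≠ 0)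
    (k : ZMod N) :
    site N ω q (u * (a⁻¹ * ω⁻¹)) (u * (a * ω)) k * (1 - u * a * ω ^ k.val) =
      q⁻¹ * (ω ^ k.val - u * a⁻¹) * site N ω q (u * (a⁻¹ * ω⁻¹)) (u * (a * ω)) (k - 1) := by
  rcases hk : k.val with _ | n
  · obtain rfl : k = 0 := (ZMod.val_eq_zero k).1 hk
    rw [zero_sub, site_neg_one hω hqN haN hr hden]
    simp only [site, hk, qsf, Finset.range_zero, Finset.prod_empty]
    rw [pow_zero]
    generalize 1 - u * a⁻¹ = d at *
    field_simp
    simp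
  · have hlt : n + 1 < N := hk ▸ ZMod.val_lt k
    have hQ := hr (n + 1) hlt
    have hω0 : ω ≠ 0 := hq2 ▸ pow_ne_zero 2 hq0
    have e : q ^ ((n + 1) ^ 2) = q⁻¹ * ω ^ (n + 1) * q ^ (n ^ 2) := by
      rw [← hq2, ← pow_mul, eq_comm, mul_assoc, inv_mul_eq_iff_eq_mul₀ hq0]
      ring
    have e' : ω ^ (n + 1) * (1 - u * (a⁻¹ * ω⁻¹) * ω⁻¹ ^ n) = ω ^ (n + 1) - u * a⁻¹ := by
      rw [inv_pow, pow_succ]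
      field_simp
    simp only [site, hk, val_sub_one hk]
    rw [qsf_succ] at hQ
    rw [qsf_succ, qsf_succ, e, ← e']
    have hQ1 := left_ne_zero_of_mul hQ
    have hQ2 := right_ne_zero_of_mul hQ
    have e2 : 1 - u * a * ω ^ (n + 1) = 1 - u * (a * ω) * ω ^ n := by ring
    rw [e2]
    generalize qsf (u * (a * ω)) ω n = Q at *
    generalize 1 - u * (a * ω) * ω ^ n = R at *
    field_simp

/-- Diagonal entry producing `|q⁻¹x, l - 1⟩`. -/
lemma site_minus (hr : ∀ n < N, qsf (u * (a * ω)) ω n ≠ 0) (hr2 : ∀ n < N, qsf (u * a) ω n ≠ 0)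
    (p : ℂ) (k : ZMod N) :
    site N ω q p (u * (a * ω)) k * (1 - u * a * ω ^ k.val) =
      (1 - u * a) * site N ω q p (u * a) k := by
  have h1 := hr _ (ZMod.val_lt k)
  have h2 := hr2 _ (ZMod.val_lt k)
  have h := (qsf_succ (u * a) ω k.val).symm.trans (qsf_succ' (u * a) ω k.val)
  rw [mul_assoc u a ω] at h
  simp only [site]
  rw [← mul_div_assoc, ← mul_div_assoc, ← mul_div_assoc, div_mul_eq_mul_div, div_eq_div_iff h1 h2]
  linear_combination q ^ k.val ^ 2 * qsf p ω⁻¹ k.val * h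

/-- Diagonal entry producing `|qx, l - 1⟩`. -/
lemma site_plus (hω : IsPrimitiveRoot ω N) (hq2 : q ^ 2 = ω) (hq0 : q ≠ 0) (hqN : q ^ N = 1)
    (ha : a ≠ 0) (haN : a ^ N = 1) (hr : ∀ n < N, qsf (u * (a * ω)) ω n ≠ 0)
    (hden : 1 - u * a⁻¹ ≠ 0) (k : ZMod N) :
    site N ω q (u * (a⁻¹ * ω⁻¹)) (u * (a * ω)) k +
        q⁻¹ * a⁻¹ * u * site N ω q (u * (a⁻¹ * ω⁻¹)) (u * (a * ω)) (k - 1) =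
      (1 - u ^ 2) / (1 - u * a⁻¹) * site N ω q (u * a⁻¹) (u * (a * ω)) k := by
  rcases hk : k.val with _ | n
  · obtain rfl : k = 0 := (ZMod.val_eq_zero k).1 hk
    rw [zero_sub, site_neg_one hω hqN haN hr hden]
    simp only [site, hk, qsf, Finset.range_zero, Finset.prod_empty]
    rw [div_mul_eq_mul_div, eq_div_iff hden, add_mul,
      mul_assoc (q⁻¹ * a⁻¹ * u) _ (1 - u * a⁻¹), div_mul_cancel₀ _ hden]
    field_simp
    ring
  · have hlt : n + 1 < N := hk ▸ ZMod.val_lt k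
    have hQ := hr (n + 1) hlt
    rw [qsf_succ] at hQ
    have hQ1 := left_ne_zero_of_mul hQ
    have hQ2 := right_ne_zero_of_mul hQ
    have e2 : 1 - u * a * ω ^ k.val = 1 - u * (a * ω) * ω ^ n := by rw [hk]; ring
    have e : q ^ ((n + 1) ^ 2) = q⁻¹ * ω ^ (n + 1) * q ^ (n ^ 2) := by
      rw [← hq2, ← pow_mul, eq_comm, mul_assoc, inv_mul_eq_iff_eq_mul₀ hq0]
      ring
    have e3 : site N ω q (u * a⁻¹) (u * (a * ω)) k * (1 - u * a * ω ^ k.val) =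
        q⁻¹ * ω ^ k.val * (1 - u * a⁻¹) *
          site N ω q (u * (a⁻¹ * ω⁻¹)) (u * (a * ω)) (k - 1) := by
      rw [e2]
      simp only [site, hk, val_sub_one hk]
      rw [qsf_succ' (u * a⁻¹), qsf_succ, e, mul_assoc u a⁻¹]
      generalize qsf (u * (a * ω)) ω n = Q at *
      generalize 1 - u * (a * ω) * ω ^ n = R at *
      field_simp
    have e4 := site_rec hω hq2 hq0 hqN haN hr hden k
    refine mul_right_cancel₀ (e2 ▸ hQ2 : 1 - u * a * ω ^ k.val ≠ 0) ?_
    rw [mul_assoc _ _ (1 - u * a * ω ^ k.val), e3, add_mul, e4, div_mul_eq_mul_div,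
      eq_div_iff hden]
    field_simp
    ring

end Site

lemma cast_finRange_nodup (L : ℕ) [NeZero L] :
    ((List.finRange L).map fun j : Fin L => ((j : ℕ) : ZMod L)).Nodup := by
  refine (List.nodup_finRange L).map fun i j hij => Fin.ext ?_
  have h := congrArg ZMod.val hij
  rwa [ZMod.val_natCast, ZMod.val_natCast, Nat.mod_eq_of_lt i.2, Nat.mod_eq_of_lt j.2] at h

lemma mem_cast_finRange {L : ℕ} [NeZero L] (j : ZMod L) :
    j ∈ (List.finRange L).map fun j : Fin L => ((j : ℕ) : ZMod L) :=
  List.mem_map.2 ⟨⟨j.val, ZMod.val_lt j⟩, List.mem_finRange _, ZMod.natCast_zmod_val j⟩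

lemma prod_map_cast_finRange {L : ℕ} [NeZero L] (g : ZMod L → ℂ) :
    (((List.finRange L).map fun j : Fin L => ((j : ℕ) : ZMod L)).map g).prod = ∏ j, g j := by
  classical
  rw [← List.prod_toFinset g (cast_finRange_nodup L)]
  congr 1
  ext j
  simpa using mem_cast_finRange j

/-- The transfer matrix applied to a product vector is the trace of a product of numerical
`2 × 2` matrices. -/
lemma transfer_mulVec_prod {N L : ℕ} [NeZero N] [NeZero L] (ω : ℂ)
    (h : ZMod L → ℂ × ℂ × ℂ × ℂ) (x : ℂ) (v : ZMod L → ZMod N → ℂ) (k : ZMod L → ZMod N) :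
    (transfer N L ω h x).mulVec (fun k => ∏ j, v j (k j)) k =
      (((List.finRange L).map fun j : Fin L => ((j : ℕ) : ZMod L)).map fun j =>
          (Lop N ω (h j) x).map fun B => B.mulVec (v j) (k j)).prod 0 0 +
        (((List.finRange L).map fun j : Fin L => ((j : ℕ) : ZMod L)).map fun j =>
          (Lop N ω (h j) x).map fun B => B.mulVec (v j) (k j)).prod 1 1 := by
  have hm : mono N L ω h x = (((List.finRange L).map fun j : Fin L => ((j : ℕ) : ZMod L)).map
      fun j => (Lop N ω (h j) x).map (emb N L j)).prod := by
    -- in `mono` the list of sites is the list of naturals `0, …, L - 1`, built monadically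
    have hl : (List.finRange L >>= fun a => pure (a : ℕ)) =
        (List.finRange L).map fun a : Fin L => (a : ℕ) :=
      List.flatMap_pure_eq_map _ _
    rw [mono, hl, List.map_map, List.map_map]
    rfl
  have hempty : Finset.univ.filter
      (· ∉ (List.finRange L).map fun j : Fin L => ((j : ℕ) : ZMod L)) = ∅ :=
    Finset.filter_false_of_mem fun j _ => not_not.2 (mem_cast_finRange j)
  rw [transfer, Matrix.add_mulVec, Pi.add_apply, hm,
    prod_emb_mulVec (fun j => Lop N ω (h j) x) v _ (cast_finRange_nodup L),
    prod_emb_mulVec (fun j => Lop N ω (h j) x) v _ (cast_finRange_nodup L), hempty,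
    Finset.prod_empty, mul_one, mul_one]

/-- action of the normalized transfer matrix (parameters
`h_j = (q⁻¹, q⁻¹c*_j, c*_j, 1)`) on the Baxter vacuum vectors `|x,l⟩`:
`T(x)|x,l⟩ = Δ₋(x,l)|q⁻¹x,l−1⟩ + Δ₊(x,l)|qx,l−1⟩` with
`Δ₋(x,l) = ∏_j (1−xc*_jq^l)` and `Δ₊(x,l) = ∏_j (1−x²c*_j²)/(1−xc*_jq^{−l})`. -/
theorem normalized_transfer_on_ket (M L : ℕ) [NeZero L] (hM : 1 ≤ M) (ω : ℂ)
    (hω : IsPrimitiveRoot ω (2 * M + 1)) (q : ℂ) (hq : q = ω ^ (M + 1))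
    (cstar : ZMod L → ℂ) (hcs : ∀ j, cstar j ≠ 0) (x : ℂ) (l : ℤ)
    (hk1 : ketDefined (2 * M + 1) L ω q cstar x l)
    (hk2 : ketDefined (2 * M + 1) L ω q cstar (q⁻¹ * x) (l - 1))
    (hk3 : ketDefined (2 * M + 1) L ω q cstar (q * x) (l - 1))
    (hden : ∀ j : ZMod L, 1 - x * cstar j * q ^ (-l) ≠ 0) :
    (transfer (2 * M + 1) L ω (fun j => (q⁻¹, q⁻¹ * cstar j, cstar j, 1)) x).mulVec
        (ket (2 * M + 1) L ω q cstar x l) =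
      (∏ j : ZMod L, (1 - x * cstar j * q ^ l)) •
          ket (2 * M + 1) L ω q cstar (q⁻¹ * x) (l - 1) +
        (∏ j : ZMod L, (1 - x ^ 2 * cstar j ^ 2) / (1 - x * cstar j * q ^ (-l))) •
          ket (2 * M + 1) L ω q cstar (q * x) (l - 1) := by
  have hN0 : NeZero (2 * M + 1) := ⟨by omega⟩
  have hq2 : q ^ 2 = ω := by
    rw [hq, ← pow_mul, show (M + 1) * 2 = (2 * M + 1) + 1 by ring, pow_succ, hω.pow_eq_one,
      one_mul]
  have hqN : q ^ (2 * M + 1) = 1 := by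
    rw [hq, ← pow_mul, mul_comm, pow_mul, hω.pow_eq_one, one_pow]
  have hq0 : q ≠ 0 := by
    rintro rfl
    simp at hqN
  obtain ⟨a, haq⟩ : ∃ a, a = q ^ l := ⟨_, rfl⟩
  have ha : a ≠ 0 := haq ▸ zpow_ne_zero l hq0
  have haN : a ^ (2 * M + 1) = 1 := by
    rw [haq, ← zpow_natCast, ← _root_.zpow_mul, mul_comm, _root_.zpow_mul, zpow_natCast, hqN, _root_.one_zpow]
  -- the arguments of the `q`-shifted factorials in terms of `u = x c*_j` and `a = q^l`
  have e1 : q ^ (l + 2) = a * ω := by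
    rw [zpow_add₀ hq0, ← haq, ← hq2]; rfl
  have e2 : q ^ (-l - 2) = a⁻¹ * ω⁻¹ := by
    rw [show -l - 2 = -(l + 2) by ring, _root_.zpow_neg, e1, mul_inv]
  have e3 : q ^ (l - 1 + 2) = a * q := by
    rw [show l - 1 + 2 = l + 1 by ring, zpow_add_one₀ hq0, ← haq]
  have e4 : q ^ (-(l - 1) - 2) = a⁻¹ * q⁻¹ := by
    rw [show -(l - 1) - 2 = -(l - 1 + 2) by ring, _root_.zpow_neg, e3, mul_inv]
  have e5 : q ^ (-l) = a⁻¹ := by rw [_root_.zpow_neg, haq]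
  have m1 (c : ℂ) : q⁻¹ * x * c * (a * q) = x * c * a := by field_simp
  have m2 (c : ℂ) : q⁻¹ * x * c * (a⁻¹ * q⁻¹) = x * c * (a⁻¹ * ω⁻¹) := by
    rw [← hq2]; field_simp
  have m3 (c : ℂ) : q * x * c * (a * q) = x * c * (a * ω) := by
    rw [← hq2]; ring
  have m4 (c : ℂ) : q * x * c * (a⁻¹ * q⁻¹) = x * c * a⁻¹ := by field_simp
  simp only [ketDefined, e1, e3, m1, m3] at hk1 hk2 hk3
  rw [e5] at hden
  funext k
  rw [Pi.add_apply, Pi.smul_apply, Pi.smul_apply, ket_eq_prod, ket_eq_prod,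
    funext (ket_eq_prod (2 * M + 1) L ω q cstar x l)]
  simp only [e1, e2, e3, e4, e5, m1, m2, m3, m4, ← haq, smul_eq_mul]
  rw [← Finset.prod_mul_distrib, ← Finset.prod_mul_distrib,
    transfer_mulVec_prod ω _ x (fun j => site (2 * M + 1) ω q (x * cstar j * (a⁻¹ * ω⁻¹))
      (x * cstar j * (a * ω))) k,
    trace_prod_of_triangular _ (-a⁻¹), prod_map_cast_finRange, prod_map_cast_finRange]
  · -- the diagonal entries of the triangularized matrices
    congr 1 <;> refine Finset.prod_congr rfl fun j _ => ?_
    · rw [← site_minus (hk1 j) (hk2 j),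
        site_rec hω hq2 hq0 hqN haN (hk1 j) (hden j)]
      simp [Lop, Matrix.smul_mulVec, Yop_mulVec, Xop_mulVec]
      ring
    · rw [← mul_pow, ← site_plus hω hq2 hq0 hqN ha haN (hk1 j) (hden j)]
      simp [Lop, Matrix.smul_mulVec, Xop_mulVec]
      ring
  · -- `(1, -a⁻¹)ᵀ` is an eigenvector: the recursion multiplied by `-a⁻¹`
    intro j
    have h := site_rec hω hq2 hq0 hqN haN (hk1 j) (hden j) (k j)
    simp [Lop, Matrix.smul_mulVec, Yop_mulVec, Xop_mulVec, Zop_mulVec]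
    generalize site (2 * M + 1) ω q (x * cstar j * (a⁻¹ * ω⁻¹)) (x * cstar j * (a * ω)) (k j) = F
      at *
    field_simp at h ⊢
    linear_combination -h

end
end

section
/- (Bethe Ansatz equations) Let d ≥ 1, let z₁,…,z_d ∈ ℂ∖{0}, and suppose Q(x) := ∏_{i=1}^d (x − z_i⁻¹) together with some polynomial Λ_m ∈ ℂ[x] satisfies (rBeq). Fix l ∈ {1,…,d} and assume qz_l − c*_j ≠ 0 for all j = 0,…,L−1 and qz_i − z_l ≠ 0 for all i ≠ l. Then q^{L+2m+d}·∏_{j=0}^{L−1} (z_l + c*_j)/(qz_l − c*_j) = ∏_{i=1, i≠l}^{d} (z_i − qz_l)/(qz_i − z_l). -/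
/-! Evaluating (rBeq) at the root `x = z_l⁻¹` of `Q` kills the left-hand side. Clearing
denominators in every factor of the two terms on the right, the first becomes `q^{-(m+L+d)}` and
the second `q^m` times a common quantity, up to the products in the Bethe equation, while the
`i = l` factors of `Q(xq⁻¹)` and `Q(xq)` contribute `1 - q` and `q - 1`. Since `q ≠ 1`, because
`ω` has order `2M+1` and `0 < M+1 < 2M+1`, these cancel and leave the sign needed to turn the
vanishing sum into the claimed equality. -/

open Polynomial

noncomputable section

/-- The Baxter T-Q polynomial equation (rBeq) for a pair `(Λ_m, Q)`:
`Λ_m(x)Q(x) = q^{−m} ∏_j(1−xc*_jq⁻¹) Q(xq⁻¹) + q^m ∏_j(1+xc*_j) Q(xq)`. -/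
def rBeq {ι : Type*} [Fintype ι] (q : ℂ) (cstar : ι → ℂ) (m : ℕ)
    (Λm Q : Polynomial ℂ) : Prop :=
  Λm * Q =
    Polynomial.C (q ^ (-(m : ℤ))) *
        (∏ j : ι, (1 - Polynomial.C (cstar j * q⁻¹) * Polynomial.X)) *
        Q.comp (Polynomial.C q⁻¹ * Polynomial.X) +
      Polynomial.C (q ^ m) *
        (∏ j : ι, (1 + Polynomial.C (cstar j) * Polynomial.X)) *
        Q.comp (Polynomial.C q * Polynomial.X)

/-- Bethe Ansatz equations: if `Q(x) = ∏_{i=1}^d (x − z_i⁻¹)` together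
with some `Λ_m` satisfies (rBeq), then each root datum `z_l` satisfies
`q^{L+2m+d} ∏_j (z_l+c*_j)/(qz_l−c*_j) = ∏_{i≠l} (z_i−qz_l)/(qz_i−z_l)`. -/
theorem bethe_ansatz_equations (M L : ℕ) (hM : 1 ≤ M) (hL : 1 ≤ L) (ω : ℂ)
    (hω : IsPrimitiveRoot ω (2 * M + 1)) (q : ℂ) (hq : q = ω ^ (M + 1))
    (cstar : Fin L → ℂ) (hcs : ∀ j, cstar j ≠ 0) (m : ℕ) (hm : m ≤ M)
    (d : ℕ) (hd : 1 ≤ d) (z : Fin d → ℂ) (hz : ∀ i, z i ≠ 0) (Λm : Polynomial ℂ)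
    (hQ : rBeq q cstar m Λm (∏ i : Fin d, (Polynomial.X - Polynomial.C (z i)⁻¹)))
    (l : Fin d) (h1 : ∀ j : Fin L, q * z l - cstar j ≠ 0)
    (h2 : ∀ i : Fin d, i ≠ l → q * z i - z l ≠ 0) :
    q ^ (L + 2 * m + d) * ∏ j : Fin L, (z l + cstar j) / (q * z l - cstar j) =
      ∏ i ∈ Finset.univ.erase l, (z i - q * z l) / (q * z i - z l) := by
  have hω0 : ω ≠ 0 := hω.ne_zero (by omega)
  have hq0 : q ≠ 0 := hq ▸ pow_ne_zero _ hω0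
  have hq1 : q ≠ 1 := hq ▸ hω.pow_ne_one_of_pos_of_lt (by omega) (by omega)
  have hzl := hz l
  have ev := congrArg (Polynomial.eval (z l)⁻¹) hQ
  simp only [eval_mul, eval_add, eval_sub, eval_prod, eval_comp, eval_X, eval_C, eval_one] at ev
  rw [Finset.prod_eq_zero (Finset.mem_univ l) (sub_self _), mul_zero] at ev
  have eA : ∏ j : Fin L, (1 - cstar j * q⁻¹ * (z l)⁻¹) =
      (∏ j : Fin L, (q * z l - cstar j)) / (q * z l) ^ L := by
    rw [← Fin.prod_const, ← Finset.prod_div_distrib]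
    exact Finset.prod_congr rfl fun j _ => by field_simp
  have eB : ∏ j : Fin L, (1 + cstar j * (z l)⁻¹) =
      (∏ j : Fin L, (z l + cstar j)) / z l ^ L := by
    rw [← Fin.prod_const, ← Finset.prod_div_distrib]
    exact Finset.prod_congr rfl fun j _ => by field_simp
  have eC : ∏ i : Fin d, (q⁻¹ * (z l)⁻¹ - (z i)⁻¹) =
      (∏ i : Fin d, (z i - q * z l)) / ((q * z l) ^ d * ∏ i : Fin d, z i) := by
    rw [← Fin.prod_const, ← Finset.prod_mul_distrib, ← Finset.prod_div_distrib]
    exact Finset.prod_congr rfl fun i _ => by have := hz i; field_simp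
  have eD : ∏ i : Fin d, (q * (z l)⁻¹ - (z i)⁻¹) =
      (∏ i : Fin d, (q * z i - z l)) / (z l ^ d * ∏ i : Fin d, z i) := by
    rw [← Fin.prod_const, ← Finset.prod_mul_distrib, ← Finset.prod_div_distrib]
    exact Finset.prod_congr rfl fun i _ => by have := hz i; field_simp
  rw [eA, eB, eC, eD, ← Finset.mul_prod_erase _ (fun i => z i - q * z l) (Finset.mem_univ l),
    ← Finset.mul_prod_erase _ (fun i => q * z i - z l) (Finset.mem_univ l)] at ev
  have hZ : ∏ i : Fin d, z i ≠ 0 := Finset.prod_ne_zero_iff.2 fun i _ => hz i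
  have hA : ∏ j : Fin L, (q * z l - cstar j) ≠ 0 := Finset.prod_ne_zero_iff.2 fun j _ => h1 j
  have hP : ∏ i ∈ Finset.univ.erase l, (q * z i - z l) ≠ 0 :=
    Finset.prod_ne_zero_iff.2 fun i hi => h2 i (Finset.ne_of_mem_erase hi)
  rw [Finset.prod_div_distrib, Finset.prod_div_distrib, ← mul_div_assoc, div_eq_div_iff hA hP]
  generalize ∏ i : Fin d, z i = Z at *
  generalize ∏ j : Fin L, (q * z l - cstar j) = A at *
  generalize ∏ j : Fin L, (z l + cstar j) = B at *
  generalize ∏ i ∈ Finset.univ.erase l, (q * z i - z l) = P at *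
  generalize ∏ i ∈ Finset.univ.erase l, (z i - q * z l) = R at *
  -- Multiplying the evaluated equation by `q^(m+L+d) z_l^(L+d) ∏ z_i` clears all denominators;
  -- the nonzero factor `(q - 1) z_l` coming from `i = l` is then cancelled.
  have key : (q - 1) * z l * (q ^ (L + 2 * m + d) * B * P - R * A) = 0 := by
    have h := congrArg (fun t => t * (q ^ (m + L + d) * z l ^ (L + d) * Z)) ev
    simp only [zero_mul] at h
    rw [h, zpow_neg, zpow_natCast]
    field_simp
    ring
  exact sub_eq_zero.1
    ((mul_eq_zero.1 key).resolve_left (mul_ne_zero (sub_ne_zero.2 hq1) hzl))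

end
end
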